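/- arXiv:1710.02329 — 2 statements merged into one kernel-verified Lean document; each statement's English description precedes it below -/
import Mathlib

section
/- Let A be a complete deterministic register automaton with k registers over an infinite data domain D, let v be a synchronizing data word for A containing at least k distinct data values, and let x_1, ..., x_k be the first k pairwise distinct data values occurring in v, listed in order of first occurrence. Then for every location ℓ of A and every 1 ≤ i ≤ k there exists a data word u with data(u) ⊆ {x_1, ..., x_i} such that every configuration (ℓ', ν) in post({ℓ} × D^k, u) has at least i registers r with ν(r) ∈ {x_1, ..., x_i}. -/
open scoped Classical

/-- Register constraints over a set `R` of registers: built from the atom `true` and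
atoms `= r` for `r ∈ R` using conjunction and negation. -/
inductive RC (R : Type) : Type
  | tt : RC R
  | req : R → RC R
  | conj : RC R → RC R → RC R
  | neg : RC R → RC R

/-- Satisfaction of a register constraint by a register valuation `ν` and a datum `d`. -/
def RC.sat {R D : Type} (ν : R → D) (d : D) : RC R → Prop
  | RC.tt => True
  | RC.req r => ν r = d
  | RC.conj φ ψ => RC.sat ν d φ ∧ RC.sat ν d ψ
  | RC.neg φ => ¬ RC.sat ν d φ

/-- A configuration: a location together with a register valuation. -/
abbrev Config (L R D : Type) : Type := L × (R → D)

/-- A transition: source location, letter, guard, update set, target location. -/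
abbrev RATrans (L A R : Type) : Type := L × A × RC R × Set R × L

/-- The update `ν[up := d]` of a register valuation. -/
noncomputable def updVal {R D : Type} (ν : R → D) (up : Set R) (d : D) : R → D :=
  fun r => if r ∈ up then d else ν r

/-- One-step successor relation of the register automaton with transition relation `T`:
`Step T q (a, d) q'` holds iff `q' ∈ post(q, (a, d))`. -/
def Step {L A R D : Type} (T : Set (RATrans L A R)) (q : Config L R D) (i : A × D)
    (q' : Config L R D) : Prop :=
  ∃ (φ : RC R) (up : Set R) (ℓ' : L),
    (q.1, i.1, φ, up, ℓ') ∈ T ∧ RC.sat q.2 i.2 φ ∧ q' = (ℓ', updVal q.2 up i.2)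

/-- `post` of a set of configurations on a single input. -/
def postStep {L A R D : Type} (T : Set (RATrans L A R)) (S : Set (Config L R D)) (i : A × D) :
    Set (Config L R D) :=
  {q' | ∃ q ∈ S, Step T q i q'}

/-- `post` of a set of configurations on a data word. -/
def postWord {L A R D : Type} (T : Set (RATrans L A R)) (S : Set (Config L R D)) :
    List (A × D) → Set (Config L R D)
  | [] => S
  | i :: w => postWord T (postStep T S i) w

/-- Completeness: every configuration has at least one successor on every input. -/
def RAComplete (D : Type) {L A R : Type} (T : Set (RATrans L A R)) : Prop :=
  ∀ (q : Config L R D) (i : A × D), ∃ q', Step T q i q'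

/-- Determinism: every configuration has at most one successor on every input. -/
def RADet (D : Type) {L A R : Type} (T : Set (RATrans L A R)) : Prop :=
  ∀ (q : Config L R D) (i : A × D) (q₁ q₂ : Config L R D),
    Step T q i q₁ → Step T q i q₂ → q₁ = q₂

/-- The set of data values occurring in a data word. -/
def dataSet {A D : Type} (w : List (A × D)) : Set D := {d | ∃ p ∈ w, p.2 = d}

/-- A synchronizing data word: a nonempty data word sending the set of all
configurations to a single configuration. -/
def IsSync (D : Type) {L A R : Type} (T : Set (RATrans L A R)) (w : List (A × D)) : Prop :=
  w ≠ [] ∧ ∃ q : Config L R D, postWord T (Set.univ : Set (Config L R D)) w = {q}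

/-- `x` is the `i`-th datum of the list `ds` of data values (i.e. the `i`-th distinct
value in order of first occurrence): there is a position `j` holding `x`, such that `x`
does not occur before position `j` and exactly `i` distinct values occur up to `j`. -/
def IsIthDatum {D : Type} (ds : List D) (i : ℕ) (x : D) : Prop :=
  ∃ (j : ℕ) (h : j < ds.length), ds.get ⟨j, h⟩ = x ∧ x ∉ ds.take j ∧
    {d : D | d ∈ ds.take (j + 1)}.ncard = i

def Run {L A R D : Type} (T : Set (RATrans L A R)) :
    Config L R D → List (A × D) → Config L R D → Prop
  | q, [], q' => q = q'
  | q, i :: w, q' => ∃ q1, Step T q i q1 ∧ Run T q1 w q'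

theorem mem_postWord {L A R D : Type} (T : Set (RATrans L A R)) (w : List (A × D)) :
    ∀ (S : Set (Config L R D)) (q' : Config L R D),
      q' ∈ postWord T S w ↔ ∃ q ∈ S, Run T q w q' := by
  induction w with
  | nil => intro S q'; simp [postWord, Run]
  | cons i w ih =>
    intro S q'
    simp only [postWord, Run, ih, postStep, Set.mem_ofPred_eq]
    constructor
    · rintro ⟨q1, ⟨q, hq, hs⟩, hr⟩
      exact ⟨q, hq, q1, hs, hr⟩
    · rintro ⟨q, hq, q1, hs, hr⟩
      exact ⟨q1, ⟨q, hq, hs⟩, hr⟩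

theorem run_append {L A R D : Type} (T : Set (RATrans L A R)) (w w' : List (A × D)) :
    ∀ (q q' : Config L R D), Run T q (w ++ w') q' ↔ ∃ p, Run T q w p ∧ Run T p w' q' := by
  induction w with
  | nil => intro q q'; simp [Run]
  | cons i w ih =>
    intro q q'
    simp only [List.cons_append, Run, ih]
    constructor
    · rintro ⟨q1, h1, p, h2, h3⟩
      exact ⟨p, ⟨q1, h1, h2⟩, h3⟩
    · rintro ⟨p, ⟨q1, h1, h2⟩, h3⟩
      exact ⟨q1, h1, p, h2, h3⟩

theorem run_exists {L A R D : Type} (T : Set (RATrans L A R)) (hcomp : RAComplete D T)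
    (w : List (A × D)) : ∀ q : Config L R D, ∃ q', Run T q w q' := by
  induction w with
  | nil => intro q; exact ⟨q, rfl⟩
  | cons i w ih =>
    intro q
    obtain ⟨q1, h1⟩ := hcomp q i
    obtain ⟨q', h2⟩ := ih q1
    exact ⟨q', q1, h1, h2⟩

theorem run_det {L A R D : Type} (T : Set (RATrans L A R)) (hdet : RADet D T)
    (w : List (A × D)) : ∀ q p p' : Config L R D, Run T q w p → Run T q w p' → p = p' := by
  induction w with
  | nil => intro q p p' h h'; exact h.symm.trans h'
  | cons i w ih =>
    rintro q p p' ⟨q1, h1, h2⟩ ⟨q2, h3, h4⟩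
    have := hdet _ _ _ _ h1 h3
    subst this
    exact ih _ _ _ h2 h4

theorem sat_congr {R D : Type} (ν ν' : R → D) (d d' : D)
    (h : ∀ r, ν r = d ↔ ν' r = d') (φ : RC R) : RC.sat ν d φ ↔ RC.sat ν' d' φ := by
  induction φ with
  | tt => simp [RC.sat]
  | req r => exact h r
  | conj φ ψ h1 h2 => simp [RC.sat, h1, h2]
  | neg φ h1 => simp [RC.sat, h1]

/-- number of registers holding a value in `X` -/
noncomputable def cnt {L R D : Type} (X : Set D) (q : Config L R D) : ℕ := {r : R | q.2 r ∈ X}.ncard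

theorem run_mono {L A R D : Type} [Fintype R] (T : Set (RATrans L A R)) (X : Set D)
    (w : List (A × D)) : ∀ q p : Config L R D, (∀ e ∈ w, e.2 ∈ X) → Run T q w p →
      ∀ r, q.2 r ∈ X → p.2 r ∈ X := by
  induction w with
  | nil => intro q p _ h r hr; cases h; exact hr
  | cons i w ih =>
    rintro q p hw ⟨q1, ⟨φ, up, l, h1, h2, rfl⟩, h3⟩ r hr
    refine ih _ _ (fun e he => hw e (by simp [he])) h3 r ?_
    simp only [updVal]
    split_ifs
    · exact hw i (by simp)
    · exact hr

theorem cnt_mono {L A R D : Type} [Fintype R] (T : Set (RATrans L A R)) (X : Set D)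
    (w : List (A × D)) (q p : Config L R D) (hw : ∀ e ∈ w, e.2 ∈ X) (h : Run T q w p) :
    cnt X q ≤ cnt X p :=
  Set.ncard_le_ncard (fun r hr => run_mono T X w q p hw h r hr) (Set.toFinite _)

/-- Simulation of a run over `Y` by a run over `X`. -/
theorem simul {L A R D : Type} [Fintype R] (T : Set (RATrans L A R)) (X Y : Set D)
    (i : ℕ) (hiR : i ≤ Fintype.card R) (hiX : i ≤ X.ncard)
    (w : List (A × D)) : ∀ q q' qf : Config L R D, (∀ e ∈ w, e.2 ∈ Y) → Run T q w qf →
      (∀ r, qf.2 r ∈ Y) → q.1 = q'.1 → (∀ r, q.2 r ∈ Y ↔ q'.2 r ∈ X) →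
      (∀ r s, q.2 r ∈ Y → q.2 s ∈ Y → (q.2 r = q.2 s ↔ q'.2 r = q'.2 s)) →
      ∃ u : List (A × D), (∀ e ∈ u, e.2 ∈ X) ∧ ∃ p, Run T q' u p ∧ i ≤ cnt X p := by
  induction w with
  | nil =>
    intro q q' qf _ h hf h1 h2 h3
    cases h
    refine ⟨[], by simp, q', rfl, ?_⟩
    have : {r : R | q'.2 r ∈ X} = Set.univ := by
      ext r; simp [← h2, hf]
    simp only [cnt, this, Set.ncard_univ, Nat.card_eq_fintype_card]
    exact hiR
  | cons e w ih =>
    obtain ⟨a, d⟩ := e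
    rintro ⟨l, ν⟩ ⟨l', ν'⟩ qf hw ⟨q1, ⟨φ, up, l1, hT, hs, rfl⟩, hrun⟩ hf h1 h2 h3
    dsimp only at h1 h2 h3 hT hs hrun
    subst h1
    by_cases hc : i ≤ cnt X ((l, ν') : Config L R D)
    · exact ⟨[], by simp, _, rfl, hc⟩
    have hdY : d ∈ Y := hw (a, d) (by simp)
    have key : ∃ d' ∈ X, ∀ r, ν r = d ↔ ν' r = d' := by
      by_cases hr : ∃ r, ν r = d
      · obtain ⟨r, rfl⟩ := hr
        refine ⟨ν' r, (h2 r).1 hdY, fun s => ?_⟩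
        constructor
        · intro h
          exact (h3 s r (h ▸ hdY) hdY).1 h
        · intro h
          exact (h3 s r ((h2 s).2 (h ▸ (h2 r).1 hdY)) hdY).2 h
      · push Not at hr
        have : ¬ X ⊆ ν' '' {r : R | ν' r ∈ X} := by
          intro hsub
          apply hc
          refine hiX.trans ((Set.ncard_le_ncard hsub (Set.toFinite _)).trans ?_)
          exact Set.ncard_image_le (Set.toFinite _)
        obtain ⟨d', hd', hn⟩ := Set.not_subset.1 this
        refine ⟨d', hd', fun r => ⟨fun h => (hr r h).elim, fun h => (hn ⟨r, ?_, h⟩).elim⟩⟩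
        simp [h, hd']
    obtain ⟨d', hd', hdd⟩ := key
    obtain ⟨u, hu, p, hp, hpc⟩ := ih (l1, updVal ν up d) (l1, updVal ν' up d') qf
      (fun e he => hw e (by simp [he])) hrun hf rfl
      (by
        intro r
        simp only [updVal]
        split_ifs
        · simp [hdY, hd']
        · exact h2 r)
      (by
        intro r s
        simp only [updVal]
        split_ifs
        · simp
        · intro _ _
          rw [eq_comm, hdd, eq_comm]
        · intro _ _
          exact hdd r
        · exact h3 r s)
    refine ⟨(a, d') :: u, ?_, p, ⟨_, ⟨φ, up, l1, hT, (sat_congr _ _ _ _ hdd φ).1 hs, rfl⟩, hp⟩, hpc⟩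
    intro e he
    rcases List.mem_cons.1 he with rfl | he
    · exact hd'
    · exact hu e he

/-- canonical projection -/
noncomputable def proj {L R D : Type} (X : Set D) (z : D) (q : Config L R D) : Config L R D :=
  (q.1, fun r => if q.2 r ∈ X then q.2 r else z)

theorem run_proj {L A R D : Type} (T : Set (RATrans L A R)) (X : Set D) (z : D) (hz : z ∉ X)
    (w : List (A × D)) : ∀ q p : Config L R D, (∀ e ∈ w, e.2 ∈ X) → Run T q w p →
      Run T (proj X z q) w (proj X z p) := by
  induction w with
  | nil => intro q p _ h; cases h; rfl
  | cons i w ih =>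
    rintro q p hw ⟨q1, ⟨φ, up, l, h1, h2, rfl⟩, h3⟩
    have hi : i.2 ∈ X := hw i (by simp)
    refine ⟨_, ⟨φ, up, l, h1, (sat_congr _ _ _ _ ?_ φ).1 h2, ?_⟩,
      ih _ _ (fun e he => hw e (by simp [he])) h3⟩
    · intro r
      simp only [proj]
      split_ifs with h
      · rfl
      · exact ⟨fun h' => (h (h' ▸ hi)).elim, fun h' => (hz (h' ▸ hi)).elim⟩
    · simp only [proj, Prod.mk.injEq, true_and]
      funext r
      simp only [updVal]
      split_ifs <;> simp_all

theorem cnt_proj {L R D : Type} (X : Set D) (z : D) (hz : z ∉ X) (q : Config L R D) :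
    cnt X (proj X z q) = cnt X q := by
  unfold cnt
  congr 1
  ext r
  simp only [proj, Set.mem_ofPred_eq]
  split_ifs with h <;> simp [h, hz]

theorem core {L A R D : Type} [Fintype R] [Infinite D]
    (T : Set (RATrans L A R)) (hcomp : RAComplete D T) (hdet : RADet D T)
    (v : List (A × D)) (hv : IsSync D T v) (X : Set D) (hXf : X.Finite) (c : D) (hc : c ∈ X)
    (i : ℕ) (hiR : i ≤ Fintype.card R) (hiX : i ≤ X.ncard) (ℓ : L) :
    ∃ u : List (A × D), (∀ e ∈ u, e.2 ∈ X) ∧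
      ∀ q p : Config L R D, q.1 = ℓ → Run T q u p → i ≤ cnt X p := by
  obtain ⟨-, qs, hqs⟩ := hv
  have hall : ∀ q p : Config L R D, Run T q v p → p = qs := by
    intro q p h
    have : p ∈ postWord T (Set.univ : Set (Config L R D)) v :=
      (mem_postWord T v _ _).2 ⟨q, trivial, h⟩
    rw [hqs] at this
    exact this
  let Y : Set D := X ∪ {d | d ∈ v.map Prod.snd}
  have hYf : Y.Finite := hXf.union (List.finite_toSet _)
  have hvY : ∀ e ∈ v, e.2 ∈ Y := fun e he => Or.inr (List.mem_map_of_mem he)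
  obtain ⟨z, hz⟩ := hYf.exists_notMem
  have hzX : z ∉ X := fun h => hz (Or.inl h)
  have hqsY : ∀ r, qs.2 r ∈ Y := by
    obtain ⟨p, hp⟩ := run_exists T hcomp v ((ℓ, fun _ => c) : Config L R D)
    have := hall _ _ hp
    subst this
    intro r
    exact run_mono T Y v _ _ hvY hp r (Or.inl hc)
  have single : ∀ q : Config L R D, ∃ u : List (A × D), (∀ e ∈ u, e.2 ∈ X) ∧
      ∃ p, Run T q u p ∧ i ≤ cnt X p := by
    intro q
    obtain ⟨p, hp⟩ := run_exists T hcomp v (proj X z q)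
    have := hall _ _ hp
    subst this
    have hXY : ∀ r, (proj X z q).2 r ∈ Y ↔ q.2 r ∈ X := by
      intro r
      simp only [proj]
      split_ifs with h
      · exact ⟨fun _ => h, fun _ => Or.inl h⟩
      · exact ⟨fun h' => (hz h').elim, fun h' => (h h').elim⟩
    refine simul T X Y i hiR hiX v (proj X z q) q p hvY hp hqsY rfl hXY ?_
    intro r s hr hs
    rw [hXY] at hr hs
    simp [proj, hr, hs]
  have fin : ∀ F : Set (Config L R D), F.Finite → ∃ u : List (A × D), (∀ e ∈ u, e.2 ∈ X) ∧
      ∀ q ∈ F, ∀ p, Run T q u p → i ≤ cnt X p := by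
    intro F hF
    induction F, hF using Set.Finite.induction_on with
    | empty => exact ⟨[], by simp, by simp⟩
    | @insert q F _ _ ih =>
      obtain ⟨u, hu, h⟩ := ih
      obtain ⟨q1, hq1⟩ := run_exists T hcomp u q
      obtain ⟨u2, hu2, p2, hp2, hc2⟩ := single q1
      refine ⟨u ++ u2, ?_, ?_⟩
      · intro e he
        rcases List.mem_append.1 he with he | he
        · exact hu e he
        · exact hu2 e he
      · intro q' hq' p hp
        obtain ⟨m, hm1, hm2⟩ := (run_append T u u2 _ _).1 hp
        rcases hq' with rfl | hq'
        · have := run_det T hdet _ _ _ _ hq1 hm1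
          subst this
          have := run_det T hdet _ _ _ _ hp2 hm2
          subst this
          exact hc2
        · exact (h q' hq' m hm1).trans (cnt_mono T X u2 m p hu2 hm2)
  obtain ⟨u, hu, h⟩ := fin ({ℓ} ×ˢ (Set.univ.pi fun _ => insert z X))
    ((Set.finite_singleton _).prod (Set.Finite.pi fun _ => hXf.insert z))
  refine ⟨u, hu, fun q p hq hr => ?_⟩
  rw [← cnt_proj X z hzX]
  refine h (proj X z q) ?_ _ (run_proj T X z hzX u q p hu hr)
  refine ⟨hq, fun r _ => ?_⟩
  simp only [proj]
  split_ifs with h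
  · exact Or.inr h
  · exact Or.inl rfl

theorem datum_inj {D : Type} (ds : List D) (i i' : ℕ) (x : D) (h : IsIthDatum ds i x)
    (h' : IsIthDatum ds i' x) : i = i' := by
  obtain ⟨j, hj, h1, h2, h3⟩ := h
  obtain ⟨j', hj', h1', h2', h3'⟩ := h'
  have aux : ∀ a b (ha : a < ds.length), ds.get ⟨a, ha⟩ = x → x ∉ ds.take b → b ≤ a := by
    intro a b ha h hn
    by_contra hlt
    push Not at hlt
    exact hn (List.mem_take_iff_getElem.2 ⟨a, by omega, h⟩)
  have : j = j' := le_antisymm (aux _ _ hj' h1' h2) (aux _ _ hj h1 h2')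
  subst this
  exact h3.symm.trans h3'

/-- if `v` is a synchronizing data word of a complete `k`-DRA with at
least `k` distinct data, and `x 0, …, x (k-1)` are the first `k` pairwise distinct data
values of `v` in order of first occurrence, then for every location `ℓ` and every
`1 ≤ i ≤ k` there is a data word `u` over `{x 0, …, x (i-1)}` such that every
configuration reached from `{ℓ} × D^k` via `u` has at least `i` registers holding a
value among `x 0, …, x (i-1)`. -/
theorem stmt1 {L A R D : Type} [Fintype L] [Fintype A] [Fintype R] [Infinite D]
    (T : Set (RATrans L A R)) (k : ℕ) (hk : Fintype.card R = k)
    (hcomp : RAComplete D T) (hdet : RADet D T)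
    (v : List (A × D)) (hv : IsSync D T v)
    (hdata : k ≤ (dataSet v).ncard)
    (x : Fin k → D)
    (hx : ∀ i : Fin k, IsIthDatum (v.map Prod.snd) ((i : ℕ) + 1) (x i)) :
    ∀ ℓ : L, ∀ i : ℕ, 1 ≤ i → i ≤ k →
      ∃ u : List (A × D),
        dataSet u ⊆ {d : D | ∃ j : Fin k, (j : ℕ) < i ∧ x j = d} ∧
        ∀ q ∈ postWord T {p : Config L R D | p.1 = ℓ} u,
          i ≤ {r : R | ∃ j : Fin k, (j : ℕ) < i ∧ q.2 r = x j}.ncard := by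
  intro ℓ i hi hik
  have hinj : Function.Injective x := by
    intro a b hab
    have h1 := hx a
    rw [hab] at h1
    have := datum_inj _ _ _ _ h1 (hx b)
    exact Fin.ext (by omega)
  let X : Set D := x '' {j : Fin k | (j : ℕ) < i}
  have hXc : i ≤ X.ncard := by
    rw [Set.ncard_image_of_injective _ hinj]
    have : (Set.range (Fin.castLE hik)).ncard = i := by
      rw [← Set.image_univ, Set.ncard_image_of_injective _ (Fin.castLE_injective hik)]
      simp
    rw [← this]
    refine Set.ncard_le_ncard ?_ (Set.toFinite _)
    rintro _ ⟨j, rfl⟩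
    simp only [Set.mem_ofPred_eq, Fin.val_castLE, this]
    exact j.2
  obtain ⟨u, hu, h⟩ := core T hcomp hdet v hv X (Set.toFinite _) (x ⟨0, by omega⟩)
    ⟨_, (show 0 < i by omega), rfl⟩ i (by omega) hXc ℓ
  refine ⟨u, ?_, ?_⟩
  · rintro d ⟨p, hp, rfl⟩
    exact hu p hp
  · intro q hq
    obtain ⟨q0, h0, hr⟩ := (mem_postWord T u _ _).1 hq
    have := h q0 q h0 hr
    simpa [cnt, X, eq_comm] using this
end

section
/- Define tower : ℕ → ℕ by tower(0) = 1 and tower(m + 1) = 2^{tower(m)}. For every n ≥ 1 there exists a complete nondeterministic register automaton with a single register, over an alphabet with 6 letters and with at most n + 6 locations, that admits a synchronizing data word and such that every synchronizing data word w satisfies |data(w)| ≥ tower(n). -/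
open scoped Classical

/-- The tower function: `tower 0 = 1`, `tower (m+1) = 2 ^ tower m`. -/
def tower : ℕ → ℕ
  | 0 => 1
  | m + 1 => 2 ^ tower m

/-- successors produced by an error: restart. Locations: 0 sink, 1 outer counter, 2 current
counter, 3 next counter, 4 pending, 5+j stage j. -/
def pun : List (ℕ × Bool) := [(1, true), (2, true), (5, true)]

/-- successor table: letter, location, equality test; result: target and update flag. -/
def Nx (n : ℕ) : ℕ → ℕ → Bool → List (ℕ × Bool)
  | _, 0, _ => [(0, true)]
  | 0, 1, _ => [(1, false)]
  | 0, 2, true => [(3, false), (4, false)]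
  | 0, 2, false => [(2, false)]
  | 0, 3, true => pun
  | 0, 3, false => [(3, false)]
  | 0, 4, _ => pun
  | 0, l + 5, _ => [(l + 5, false)]
  | 1, 1, _ => [(1, false)]
  | 1, 2, _ => [(2, false)]
  | 1, 3, true => pun
  | 1, 3, false => [(3, false)]
  | 1, 4, true => pun
  | 1, 4, false => [(3, true)]
  | 1, l + 5, _ => [(l + 5, false)]
  | 2, 1, true => [(0, true)]
  | 2, 1, false => [(1, false)]
  | 2, 2, _ => pun
  | 2, 3, _ => [(2, false)]
  | 2, 4, _ => pun
  | 2, l + 5, _ => [(l + 5, false)]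
  | 3, 1, _ => pun
  | 3, 2, _ => [(1, false)]
  | 3, 3, _ => pun
  | 3, 4, _ => pun
  | 3, l + 5, _ => if l + 1 < n then [(l + 6, true), (2, true)] else [(0, true)]
  | _ + 4, _ + 1, _ => pun

def TT (n : ℕ) : Set (RATrans (Fin (n + 5)) (Fin 6) Unit) :=
  {t | ∃ e u : Bool, (t.2.2.2.2.val, u) ∈ Nx n t.2.1.val t.1.val e ∧
    t.2.2.1 = (if e = true then RC.req () else RC.neg (RC.req ())) ∧
    t.2.2.2.1 = (if u = true then Set.univ else ∅)}

theorem Nx_lt {n : ℕ} (hn : 1 ≤ n) (a l : ℕ) (hl : l < n + 5) (e : Bool) (l' : ℕ) (u : Bool)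
    (h : (l', u) ∈ Nx n a l e) : l' < n + 5 := by
  unfold Nx at h
  split at h <;> (try split at h) <;> simp [pun] at h <;> omega

theorem Nx_ne (n a l : ℕ) (e : Bool) : ∃ p, p ∈ Nx n a l e := by
  unfold Nx
  split <;> (try split) <;> simp [pun]

def MM {n : ℕ} {D : Type} (S : Set (Config (Fin (n + 5)) Unit D)) (k : ℕ) (x : D) : Prop :=
  ∃ q ∈ S, q.1.val = k ∧ q.2 () = x

theorem step_iff {n : ℕ} {D : Type} (q q' : Config (Fin (n + 5)) Unit D) (i : Fin 6 × D) :
    Step (TT n) q i q' ↔ ∃ u : Bool, (q'.1.val, u) ∈ Nx n i.1.val q.1.val (decide (q.2 () = i.2)) ∧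
      q'.2 () = if u = true then i.2 else q.2 () := by
  constructor
  · rintro ⟨φ, up, l', ⟨e, u, h1, h2, h3⟩, hs, rfl⟩
    simp only at h1 h2 h3
    subst h2 h3
    refine ⟨u, ?_, ?_⟩
    · cases e
      · simp [RC.sat] at hs; simpa [hs] using h1
      · simp [RC.sat] at hs; simpa [hs] using h1
    · cases u <;> simp [updVal]
  · rintro ⟨u, h1, h2⟩
    refine ⟨if decide (q.2 () = i.2) = true then RC.req () else RC.neg (RC.req ()),
      if u = true then Set.univ else ∅, q'.1,
      ⟨decide (q.2 () = i.2), u, h1, rfl, rfl⟩, ?_, ?_⟩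
    · by_cases h : q.2 () = i.2 <;> simp [h, RC.sat]
    · ext1
      · rfl
      · funext r
        cases u <;> simpa [updVal] using h2

theorem MM_post {n : ℕ} (hn : 1 ≤ n) {D : Type} (S : Set (Config (Fin (n + 5)) Unit D))
    (i : Fin 6 × D) (k' : ℕ) (x' : D) :
    MM (postStep (TT n) S i) k' x' ↔ ∃ k x, MM S k x ∧ ∃ u : Bool,
      (k', u) ∈ Nx n i.1.val k (decide (x = i.2)) ∧ x' = if u = true then i.2 else x := by
  constructor
  · rintro ⟨q', ⟨q, hq, hs⟩, rfl, rfl⟩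
    exact ⟨_, _, ⟨q, hq, rfl, rfl⟩, (step_iff _ _ _).1 hs⟩
  · rintro ⟨k, x, ⟨q, hq, rfl, rfl⟩, u, h1, h2⟩
    exact ⟨(⟨k', Nx_lt hn _ _ q.1.2 _ _ _ h1⟩, fun _ => x'),
      ⟨q, hq, (step_iff _ _ _).2 ⟨u, h1, h2⟩⟩, rfl, rfl⟩

theorem TT_complete {n : ℕ} (hn : 1 ≤ n) (D : Type) : RAComplete D (TT n) := by
  intro q i
  obtain ⟨⟨l', u⟩, h⟩ := Nx_ne n i.1.val q.1.val (decide (q.2 () = i.2))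
  exact ⟨(⟨l', Nx_lt hn _ _ q.1.2 _ _ _ h⟩, fun _ => if u = true then i.2 else q.2 ()),
    (step_iff _ _ _).2 ⟨u, h, rfl⟩⟩

/-! upper bound -/

def Win {n : ℕ} {D : Type} (S : Set (Config (Fin (n + 5)) Unit D)) : Prop :=
  ∃ w z, ∀ k x, MM (postWord (TT n) S w) k x → k = 0 ∧ x = z

theorem Win_step {n : ℕ} {D : Type} (S : Set (Config (Fin (n + 5)) Unit D)) (i : Fin 6 × D)
    (h : Win (postStep (TT n) S i)) : Win S := by
  obtain ⟨w, z, h⟩ := h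
  exact ⟨i :: w, z, h⟩

def Bel {n : ℕ} {D : Type} (S : Set (Config (Fin (n + 5)) Unit D)) (z : D) (s : ℕ)
    (A B C P : Finset D) : Prop :=
  ∀ k x, MM S k x → (k = 0 ∧ x = z) ∨ (k = 1 ∧ x ∈ A) ∨ (k = 2 ∧ x ∈ B) ∨ (k = 3 ∧ x ∈ C) ∨
    (k = 4 ∧ x ∈ P) ∨ (5 ≤ k ∧ k = s)

section upper
variable {n : ℕ} (hn : 1 ≤ n) {D : Type} {S : Set (Config (Fin (n + 5)) Unit D)} {z : D} {s : ℕ}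
  {A B C P : Finset D}

theorem L0 (hn : 1 ≤ n) (h : Bel S z s A B C ∅) (d : D) (hd : d ∉ C) :
    Bel (postStep (TT n) S (0, d)) d s A (B.erase d) (insert d C) {d} := by
  intro k' x' hm
  obtain ⟨k, x, hkx, u, h1, h2⟩ := (MM_post hn _ _ _ _).1 hm
  obtain ⟨rfl, h⟩ | ⟨rfl, h⟩ | ⟨rfl, h⟩ | ⟨rfl, h⟩ | ⟨rfl, h⟩ | ⟨h5, rfl⟩ := h k x hkx
  all_goals (try obtain ⟨k, rfl⟩ := Nat.exists_eq_add_of_le' h5)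
  all_goals by_cases hxd : x = d <;> simp [Nx, pun, hxd] at h1 h2 <;> grind

theorem L1 (hn : 1 ≤ n) (h : Bel S z s A B C P) (d : D) (hd : d ∉ C) (hP : d ∉ P) :
    Bel (postStep (TT n) S (1, d)) d s A B (insert d C) ∅ := by
  intro k' x' hm
  obtain ⟨k, x, hkx, u, h1, h2⟩ := (MM_post hn _ _ _ _).1 hm
  obtain ⟨rfl, h⟩ | ⟨rfl, h⟩ | ⟨rfl, h⟩ | ⟨rfl, h⟩ | ⟨rfl, h⟩ | ⟨h5, rfl⟩ := h k x hkx
  all_goals (try obtain ⟨k, rfl⟩ := Nat.exists_eq_add_of_le' h5)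
  all_goals by_cases hxd : x = d <;> simp [Nx, pun, hxd] at h1 h2 <;> grind

theorem L2 (hn : 1 ≤ n) (h : Bel S z s A ∅ C ∅) (d : D) :
    Bel (postStep (TT n) S (2, d)) d s (A.erase d) C ∅ ∅ := by
  intro k' x' hm
  obtain ⟨k, x, hkx, u, h1, h2⟩ := (MM_post hn _ _ _ _).1 hm
  obtain ⟨rfl, h⟩ | ⟨rfl, h⟩ | ⟨rfl, h⟩ | ⟨rfl, h⟩ | ⟨rfl, h⟩ | ⟨h5, rfl⟩ := h k x hkx
  all_goals (try obtain ⟨k, rfl⟩ := Nat.exists_eq_add_of_le' h5)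
  all_goals by_cases hxd : x = d <;> simp [Nx, pun, hxd] at h1 h2 <;> grind

theorem L3 (hn : 1 ≤ n) (h : Bel S z s ∅ B ∅ ∅) (d : D) (hs : s < n + 4) :
    Bel (postStep (TT n) S (3, d)) d (s + 1) B {d} ∅ ∅ := by
  intro k' x' hm
  obtain ⟨k, x, hkx, u, h1, h2⟩ := (MM_post hn _ _ _ _).1 hm
  obtain ⟨rfl, h⟩ | ⟨rfl, h⟩ | ⟨rfl, h⟩ | ⟨rfl, h⟩ | ⟨rfl, h⟩ | ⟨h5, rfl⟩ := h k x hkx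
  all_goals (try obtain ⟨k, rfl⟩ := Nat.exists_eq_add_of_le' h5)
  all_goals (try have hk : k + 1 < n := by omega)
  all_goals by_cases hxd : x = d <;> simp [Nx, pun, hxd] at h1 h2 <;> grind

theorem L3' (hn : 1 ≤ n) (h : Bel S z s ∅ B ∅ ∅) (d : D) (hs : n + 4 ≤ s) :
    Bel (postStep (TT n) S (3, d)) d 0 B ∅ ∅ ∅ := by
  intro k' x' hm
  obtain ⟨k, x, hkx, u, h1, h2⟩ := (MM_post hn _ _ _ _).1 hm
  obtain ⟨rfl, h⟩ | ⟨rfl, h⟩ | ⟨rfl, h⟩ | ⟨rfl, h⟩ | ⟨rfl, h⟩ | ⟨h5, rfl⟩ := h k x hkx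
  all_goals (try obtain ⟨k, rfl⟩ := Nat.exists_eq_add_of_le' h5)
  all_goals (try have hk : ¬ k + 1 < n := by omega)
  all_goals by_cases hxd : x = d <;> simp [Nx, pun, hxd] at h1 h2 <;> grind

theorem L4 (hn : 1 ≤ n) (S : Set (Config (Fin (n + 5)) Unit D)) (d : D) :
    Bel (postStep (TT n) S (4, d)) d 5 {d} {d} ∅ ∅ := by
  intro k' x' hm
  obtain ⟨k, x, hkx, u, h1, h2⟩ := (MM_post hn _ _ _ _).1 hm
  obtain _ | k := k
  all_goals simp [Nx, pun] at h1 h2 <;> grind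

theorem W_double (hn : 1 ≤ n) [Infinite D] (s : ℕ) (A : Finset D)
    (hw : ∀ (S : Set (Config (Fin (n + 5)) Unit D)) z C, Bel S z s A ∅ C ∅ → Win S) :
    ∀ (m : ℕ) (S : Set (Config (Fin (n + 5)) Unit D)) (z : D) (B C : Finset D), B.card = m →
      Disjoint B C → Bel S z s A B C ∅ → Win S := by
  intro m
  induction m with
  | zero =>
    intro S z B C hB _ h
    rw [Finset.card_eq_zero] at hB
    subst hB
    exact hw S z C h
  | succ m ih =>
    intro S z B C hB hd h
    obtain ⟨d, hdB⟩ : B.Nonempty := by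
      rw [← Finset.card_pos]; omega
    have hdC : d ∉ C := Finset.disjoint_left.1 hd hdB
    obtain ⟨e, he⟩ := Infinite.exists_notMem_finset (insert d (B ∪ C))
    simp only [Finset.mem_insert, Finset.mem_union, not_or] at he
    apply Win_step S (0, d)
    apply Win_step _ (1, e)
    refine ih _ _ _ _ ?_ ?_ (L1 hn (L0 hn h d hdC) e (by simp; tauto) (by simp; tauto))
    · rw [Finset.card_erase_of_mem hdB]; omega
    · rw [Finset.disjoint_left] at hd ⊢
      intro x hx
      simp only [Finset.mem_erase] at hx
      simp only [Finset.mem_insert, not_or]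
      refine ⟨?_, hx.1, hd hx.2⟩
      rintro rfl
      exact he.2.1 hx.2

theorem W_round (hn : 1 ≤ n) [Infinite D] (s : ℕ)
    (hw : ∀ (S : Set (Config (Fin (n + 5)) Unit D)) z B, Bel S z s ∅ B ∅ ∅ → Win S) :
    ∀ (m : ℕ) (S : Set (Config (Fin (n + 5)) Unit D)) (z : D) (A B : Finset D), A.card = m →
      Bel S z s A B ∅ ∅ → Win S := by
  intro m
  induction m with
  | zero =>
    intro S z A B hA h
    rw [Finset.card_eq_zero] at hA
    subst hA
    exact hw S z B h
  | succ m ih =>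
    intro S z A B hA h
    obtain ⟨d, hdA⟩ : A.Nonempty := by
      rw [← Finset.card_pos]; omega
    refine W_double hn s A ?_ _ S z B ∅ rfl (by simp) h
    intro S z C h
    apply Win_step S (2, d)
    refine ih _ _ _ _ ?_ (L2 hn h d)
    rw [Finset.card_erase_of_mem hdA]; omega

theorem W_end (hn : 1 ≤ n) [Infinite D] (S : Set (Config (Fin (n + 5)) Unit D)) (z : D)
    (A : Finset D) (h : Bel S z 0 A ∅ ∅ ∅) : Win S := by
  induction hm : A.card generalizing S z A with
  | zero =>
    rw [Finset.card_eq_zero] at hm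
    subst hm
    refine ⟨[], z, fun k x hk => ?_⟩
    have := h k x hk
    grind
  | succ m ih =>
    obtain ⟨d, hdA⟩ : A.Nonempty := by
      rw [← Finset.card_pos]; omega
    apply Win_step S (2, d)
    refine ih _ _ _ (L2 hn h d) ?_
    rw [Finset.card_erase_of_mem hdA]; omega

theorem W_stage (hn : 1 ≤ n) [Infinite D] (m : ℕ) :
    ∀ (s : ℕ), n + 4 ≤ s + m → ∀ (S : Set (Config (Fin (n + 5)) Unit D)) (z : D) (A B : Finset D),
      Bel S z s A B ∅ ∅ → Win S := by
  induction m with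
  | zero =>
    intro s hs S z A B h
    refine W_round hn s ?_ _ S z A B rfl h
    intro S z B h
    apply Win_step S (3, z)
    exact W_end hn _ _ _ (L3' hn h z (by omega))
  | succ m ih =>
    intro s hs S z A B h
    refine W_round hn s ?_ _ S z A B rfl h
    intro S z B h
    apply Win_step S (3, z)
    by_cases h4 : s < n + 4
    · exact ih (s + 1) (by omega) _ _ _ _ (L3 hn h z h4)
    · exact W_end hn _ _ _ (L3' hn h z (by omega))
end upper

theorem post_nonempty {n : ℕ} (hn : 1 ≤ n) {D : Type} (w : List (Fin 6 × D)) :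
    ∀ (S : Set (Config (Fin (n + 5)) Unit D)), S.Nonempty → (postWord (TT n) S w).Nonempty := by
  induction w with
  | nil => intro S h; exact h
  | cons i w ih =>
    rintro S ⟨q, hq⟩
    obtain ⟨q', h⟩ := TT_complete hn D q i
    exact ih _ ⟨q', q, hq, h⟩

theorem ex_sync {n : ℕ} (hn : 1 ≤ n) (D : Type) [Infinite D] :
    ∃ w : List (Fin 6 × D), IsSync D (TT n) w := by
  obtain ⟨d⟩ : Nonempty D := inferInstance
  obtain ⟨w, z, h⟩ := W_stage hn (n + 4) 5 (by omega) _ _ _ _ (L4 hn (Set.univ) d)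
  refine ⟨(4, d) :: w, by simp, (⟨0, by omega⟩, fun _ => z), ?_⟩
  apply Set.eq_singleton_iff_nonempty_unique_mem.2
  refine ⟨post_nonempty hn _ _ ⟨(⟨0, by omega⟩, fun _ => z), trivial⟩, ?_⟩
  intro q hq
  obtain ⟨h1, h2⟩ := h _ _ ⟨q, hq, rfl, rfl⟩
  ext1
  · exact Fin.ext h1
  · funext r; exact h2

/-! lower bound -/

def val : ℕ → ℕ → ℕ → ℕ → ℕ
  | 0, b, c, _ => b + c
  | k + 1, b, c, p => (2 * b + p + c) * 2 ^ k

def JJ {n : ℕ} {D : Type} (X : Finset D) (S : Set (Config (Fin (n + 5)) Unit D)) : Prop :=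
  ∃ (j : ℕ) (A B C : Finset D) (k p : ℕ), j < n ∧ (∃ x, MM S (j + 5) x) ∧ B ⊆ X ∧
    (∀ x ∈ A, MM S 1 x) ∧ (∀ x ∈ B, MM S 2 x) ∧ (∀ x ∈ C, MM S 3 x) ∧
    (p = 0 ∨ p = 1 ∧ ∃ x, MM S 4 x) ∧ k ≤ A.card ∧ C ⊆ X ∧
    tower (j + 1) ≤ val k B.card C.card p

theorem JJ_pun {n : ℕ} (hn : 1 ≤ n) {D : Type} {X : Finset D}
    (S : Set (Config (Fin (n + 5)) Unit D)) (d : D) (hd : d ∈ X)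
    (h : ∀ k, (k, true) ∈ pun → MM S k d) : JJ X S := by
  refine ⟨0, {d}, {d}, ∅, 1, 0, hn, ⟨d, h 5 (by simp [pun])⟩, by simpa using hd, ?_, ?_, by simp,
    by simp, by simp, by simp, by simp [tower, val]⟩
  · simpa using h 1 (by simp [pun])
  · simpa using h 2 (by simp [pun])

theorem JJ_punM {n : ℕ} (hn : 1 ≤ n) {D : Type} {X : Finset D}
    (S : Set (Config (Fin (n + 5)) Unit D)) (i : Fin 6 × D) (hd : i.2 ∈ X) (k : ℕ) (x : D)
    (hm : MM S k x) (hN : Nx n i.1.val k (decide (x = i.2)) = pun) :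
    JJ X (postStep (TT n) S i) := by
  refine JJ_pun hn _ i.2 hd fun k' hk' => ?_
  exact (MM_post hn _ _ _ _).2 ⟨k, x, hm, true, by rw [hN]; exact hk', by simp⟩

theorem JJ_step {n : ℕ} (hn : 1 ≤ n) {D : Type} {X : Finset D} (hX : X.card < tower n)
    (S : Set (Config (Fin (n + 5)) Unit D)) (i : Fin 6 × D) (hd : i.2 ∈ X) (hJ : JJ X S) :
    JJ X (postStep (TT n) S i) := by
  by_contra hc
  have hpun : ∀ k x, MM S k x → Nx n i.1.val k (decide (x = i.2)) ≠ pun :=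
    fun k x hm hN => hc (JJ_punM hn S i hd k x hm hN)
  have mv : ∀ k x k' (u : Bool), MM S k x → (k', u) ∈ Nx n i.1.val k (decide (x = i.2)) →
      MM (postStep (TT n) S i) k' (if u = true then i.2 else x) :=
    fun k x k' u hm h => (MM_post hn _ _ _ _).2 ⟨k, x, hm, u, h, rfl⟩
  apply hc
  obtain ⟨j, A, B, C, k, p, hj, ⟨y, hy⟩, hBX, hA, hB, hC, hp, hk, hCX, hv⟩ := hJ
  obtain ⟨a, d⟩ := i
  simp only at hpun mv hd
  fin_cases a
  · -- move
    have hp0 : p = 0 := by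
      rcases hp with h | ⟨_, x, hx⟩
      · exact h
      · exact absurd (by simp [Nx]) (hpun 4 x hx)
    have hdC : d ∉ C := fun h => hpun 3 d (hC d h) (by simp [Nx])
    have hC' : ∀ x ∈ C, MM (postStep (TT n) S (0, d)) 3 x := by
      intro x hx
      have hxd : x ≠ d := by rintro rfl; exact hdC hx
      simpa using mv 3 x 3 false (hC x hx) (by simp [Nx, hxd])
    have hs : ∃ x, MM (postStep (TT n) S (0, d)) (j + 5) x :=
      ⟨y, by simpa using mv (j + 5) y (j + 5) false hy (by simp [Nx])⟩
    have hA' : ∀ x ∈ A, MM (postStep (TT n) S (0, d)) 1 x := fun x hx => by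
      simpa using mv 1 x 1 false (hA x hx) (by simp [Nx])
    have hB' : ∀ x ∈ B.erase d, MM (postStep (TT n) S (0, d)) 2 x := fun x hx => by
      rw [Finset.mem_erase] at hx
      simpa using mv 2 x 2 false (hB x hx.2) (by simp [Nx, hx.1])
    by_cases hdB : d ∈ B
    · refine ⟨j, A, B.erase d, insert d C, k, 1, hj, hs, (Finset.erase_subset _ _).trans hBX,
        hA', hB', ?_, Or.inr ⟨rfl, d, ?_⟩, hk, ?_, hv.trans ?_⟩
      · intro x hx
        rcases Finset.mem_insert.1 hx with rfl | hx
        · simpa using mv 2 x 3 false (hB x hdB) (by simp [Nx])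
        · exact hC' x hx
      · simpa using mv 2 d 4 false (hB d hdB) (by simp [Nx])
      · intro x hx
        rcases Finset.mem_insert.1 hx with rfl | hx
        · exact hd
        · exact hCX hx
      · have h1 := Finset.card_erase_add_one hdB
        rw [Finset.card_insert_of_notMem hdC]
        subst hp0
        cases k with
        | zero => simp only [val]; omega
        | succ k => simp only [val]; exact Nat.mul_le_mul_right _ (by omega)
    · rw [Finset.erase_eq_of_notMem hdB] at hB'
      exact ⟨j, A, B, C, k, p, hj, hs, hBX, hA', hB', hC', Or.inl hp0, hk, hCX, hv⟩
  · -- fresh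
    have hdC : d ∉ C := fun h => hpun 3 d (hC d h) (by simp [Nx])
    have hC' : ∀ x ∈ C, MM (postStep (TT n) S (1, d)) 3 x := by
      intro x hx
      have hxd : x ≠ d := by rintro rfl; exact hdC hx
      simpa using mv 3 x 3 false (hC x hx) (by simp [Nx, hxd])
    have hs : ∃ x, MM (postStep (TT n) S (1, d)) (j + 5) x :=
      ⟨y, by simpa using mv (j + 5) y (j + 5) false hy (by simp [Nx])⟩
    have hA' : ∀ x ∈ A, MM (postStep (TT n) S (1, d)) 1 x := fun x hx => by
      simpa using mv 1 x 1 false (hA x hx) (by simp [Nx])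
    have hB' : ∀ x ∈ B, MM (postStep (TT n) S (1, d)) 2 x := fun x hx => by
      simpa using mv 2 x 2 false (hB x hx) (by simp [Nx])
    rcases hp with hp | ⟨hp, x, hx⟩
    · exact ⟨j, A, B, C, k, p, hj, hs, hBX, hA', hB', hC', Or.inl hp, hk, hCX, hv⟩
    · have hxd : x ≠ d := by
        rintro rfl
        exact hpun 4 x hx (by simp [Nx])
      refine ⟨j, A, B, insert d C, k, 0, hj, hs, hBX,
        hA', hB', ?_, Or.inl rfl, hk, ?_, hv.trans ?_⟩
      · intro x' hx'
        rcases Finset.mem_insert.1 hx' with rfl | hx'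
        · simpa using mv 4 x 3 true hx (by simp [Nx, hxd])
        · exact hC' x' hx'
      · intro x hx
        rcases Finset.mem_insert.1 hx with rfl | hx
        · exact hd
        · exact hCX hx
      · rw [Finset.card_insert_of_notMem hdC]
        cases k with
        | zero => simp only [val]; omega
        | succ k => simp only [val]; exact Nat.mul_le_mul_right _ (by omega)
  · -- round
    have hp0 : p = 0 := by
      rcases hp with h | ⟨_, x, hx⟩
      · exact h
      · exact absurd (by simp [Nx]) (hpun 4 x hx)
    have hB0 : B = ∅ := Finset.eq_empty_of_forall_notMem fun x hx =>
      hpun 2 x (hB x hx) (by simp [Nx])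
    subst hp0 hB0
    refine ⟨j, A.erase d, C, ∅, k - 1, 0, hj, ⟨y, ?_⟩, hCX, ?_, ?_, by simp, Or.inl rfl, ?_,
      by simp, hv.trans ?_⟩
    · simpa using mv (j + 5) y (j + 5) false hy (by simp [Nx])
    · intro x hx
      rw [Finset.mem_erase] at hx
      simpa using mv 1 x 1 false (hA x hx.2) (by simp [Nx, hx.1])
    · intro x hx
      simpa using mv 3 x 2 false (hC x hx) (by simp [Nx])
    · have := Finset.pred_card_le_card_erase (s := A) (a := d)
      omega
    · rcases k with _ | _ | k
      · simp [val]
      · simp [val]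
      · simp only [val, Finset.card_empty, Nat.add_sub_cancel, pow_succ]
        apply le_of_eq; ring
  · -- stage
    have hA0 : A = ∅ := Finset.eq_empty_of_forall_notMem fun x hx =>
      hpun 1 x (hA x hx) (by simp [Nx])
    have hC0 : C = ∅ := Finset.eq_empty_of_forall_notMem fun x hx =>
      hpun 3 x (hC x hx) (by simp [Nx])
    subst hA0 hC0
    obtain rfl : k = 0 := by simpa using hk
    simp only [val, Finset.card_empty, Nat.add_zero] at hv
    have hBc := Finset.card_le_card hBX
    have hjn : j + 1 < n := by
      by_contra hjn
      have : j + 1 = n := by omega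
      rw [this] at hv
      omega
    obtain ⟨t, ht⟩ : ∃ t, B.card = t + 1 := by
      have : 0 < tower (j + 1) := by simp [tower]
      exact ⟨B.card - 1, by omega⟩
    refine ⟨j + 1, B, {d}, ∅, B.card, 0, hjn, ⟨d, ?_⟩, by simpa using hd, ?_, ?_, by simp,
      Or.inl rfl, le_rfl, by simp, ?_⟩
    · simpa using mv (j + 5) y (j + 1 + 5) true hy (by simp [Nx, hjn])
    · intro x hx
      simpa using mv 2 x 1 false (hB x hx) (by simp [Nx])
    · simpa using mv (j + 5) y 2 true hy (by simp [Nx, hjn])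
    · calc tower (j + 1 + 1) = 2 ^ tower (j + 1) := rfl
        _ ≤ 2 ^ B.card := Nat.pow_le_pow_right (by norm_num) hv
        _ = _ := by rw [ht]; simp [val, pow_succ]; ring
  · exact absurd (by simp [Nx]) (hpun _ y hy)
  · exact absurd (by simp [Nx]) (hpun _ y hy)

theorem JJ_word {n : ℕ} (hn : 1 ≤ n) {D : Type} {X : Finset D} (hX : X.card < tower n)
    (w : List (Fin 6 × D)) : ∀ (S : Set (Config (Fin (n + 5)) Unit D)),
    (∀ i ∈ w, i.2 ∈ X) → JJ X S → JJ X (postWord (TT n) S w) := by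
  induction w with
  | nil => intro S _ h; exact h
  | cons i w ih =>
    intro S hw h
    exact ih _ (fun i hi => hw i (by simp [hi])) (JJ_step hn hX S i (hw i (by simp)) h)

theorem sink_post {n : ℕ} (hn : 1 ≤ n) {D : Type} (w : List (Fin 6 × D)) :
    ∀ (S : Set (Config (Fin (n + 5)) Unit D)), (∃ x, MM S 0 x) →
      ∃ x, MM (postWord (TT n) S w) 0 x := by
  induction w with
  | nil => intro S h; exact h
  | cons i w ih =>
    rintro S ⟨x, hx⟩
    exact ih _ ⟨i.2, (MM_post hn _ _ _ _).2 ⟨0, x, hx, true, by simp [Nx], by simp⟩⟩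

theorem lower {n : ℕ} (hn : 1 ≤ n) {D : Type} (w : List (Fin 6 × D)) (hw : IsSync D (TT n) w) :
    tower n ≤ (dataSet w).ncard := by
  obtain ⟨hne, q, hq⟩ := hw
  have hX : dataSet w = ((w.map Prod.snd).toFinset : Finset D) := by
    ext d; simp [dataSet]
  rw [hX, Set.ncard_coe_finset]
  by_contra hlt
  obtain ⟨i, hi⟩ := List.exists_mem_of_ne_nil w hne
  have hmem : ∀ i ∈ w, i.2 ∈ (w.map Prod.snd).toFinset := fun i hi => by
    rw [List.mem_toFinset]; exact List.mem_map_of_mem hi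
  have huniv : ∀ k, k < n + 5 → ∀ x : D,
      MM (Set.univ : Set (Config (Fin (n + 5)) Unit D)) k x :=
    fun k hk x => ⟨(⟨k, hk⟩, fun _ => x), trivial, rfl, rfl⟩
  have hJ := JJ_word hn (not_le.1 hlt) w Set.univ hmem
    (JJ_pun hn _ i.2 (hmem i hi) fun k hk => huniv k (by simp [pun] at hk; omega) _)
  obtain ⟨x, hx⟩ := sink_post hn w Set.univ ⟨i.2, huniv 0 (by omega) _⟩
  obtain ⟨j, _, _, _, _, _, _, ⟨y, hy⟩, _⟩ := hJ
  rw [hq] at hx hy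
  obtain ⟨q1, h1, h1', _⟩ := hx
  obtain ⟨q2, h2, h2', _⟩ := hy
  rw [Set.mem_singleton_iff] at h1 h2
  subst h1 h2
  omega

/-- for every `n ≥ 1` there is a complete 1-NRA over an alphabet with `6`
letters and at most `n + 6` locations that admits a synchronizing data word and all of
whose synchronizing data words have data efficiency at least `tower n`. -/
theorem stmt11 {D : Type} [Infinite D] (n : ℕ) (hn : 1 ≤ n) :
    ∃ m : ℕ, m ≤ n + 6 ∧
    ∃ T : Set (RATrans (Fin m) (Fin 6) Unit),
      RAComplete D T ∧
      (∃ w : List (Fin 6 × D), IsSync D T w) ∧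
      ∀ w : List (Fin 6 × D), IsSync D T w → tower n ≤ (dataSet w).ncard := by
  exact ⟨n + 5, by omega, TT n, TT_complete hn D, ex_sync hn D, fun w hw => lower hn w hw⟩
end
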